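/- The unit sphere of the real Hilbert space ℓ²(ℕ, ℝ), i.e. Metric.sphere (0 : lp (fun _ : ℕ => ℝ) 2) 1, is a contractible topological space. -/

import Mathlib

/-!
The contraction is a concatenation of two homotopies on the unit sphere of `ℓ²`. Let `S` be the
right shift and `e₀ = (1, 0, 0, …)`. Since `S` is an injective isometry without eigenvectors, the
segment from `x` to `S x` never meets `0`, so normalizing it gives a homotopy from the identity
to `S`. Since `S x` has vanishing zeroth coordinate, the segment from `S x` to `e₀` also avoids
`0`, so `S` is homotopic to the constant map `e₀`. The normalization step is
`homotopic_of_segment_ne_zero`, valid in any real normed space.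
-/

/-- Two maps into the unit sphere of a real normed space are homotopic when no segment joining
corresponding values passes through the origin: normalize the straight-line homotopy. -/
theorem homotopic_of_segment_ne_zero {X E : Type*} [TopologicalSpace X] [NormedAddCommGroup E]
    [NormedSpace ℝ E] (f g : C(X, Metric.sphere (0 : E) 1))
    (h : ∀ (t : ℝ) (x : X), (1 - t) • (f x : E) + t • (g x : E) ≠ 0) :
    f.Homotopic g := by
  have hn : ∀ (t : ℝ) (x : X), ‖(1 - t) • (f x : E) + t • (g x : E)‖ ≠ 0 :=
    fun t x => norm_ne_zero_iff.mpr (h t x)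
  refine ⟨⟨⟨fun p => ⟨‖(1 - (p.1 : ℝ)) • (f p.2 : E) + (p.1 : ℝ) • (g p.2 : E)‖⁻¹ •
    ((1 - (p.1 : ℝ)) • (f p.2 : E) + (p.1 : ℝ) • (g p.2 : E)), ?_⟩, ?_⟩, ?_, ?_⟩⟩
  · rw [mem_sphere_zero_iff_norm, norm_smul, norm_inv, norm_norm, inv_mul_cancel₀ (hn _ _)]
  · refine Continuous.subtype_mk ?_ _
    have hc : Continuous fun p : unitInterval × X =>
        (1 - (p.1 : ℝ)) • (f p.2 : E) + (p.1 : ℝ) • (g p.2 : E) := by fun_prop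
    exact (hc.norm.inv₀ fun p => hn _ _).smul hc
  · intro x
    ext
    simp
  · intro x
    ext
    simp

/-- The right shift `(x₀, x₁, …) ↦ (0, x₀, x₁, …)` on plain sequences. -/
def shiftSeq (x : ℕ → ℝ) : ℕ → ℝ
  | 0 => 0
  | n + 1 => x n

theorem summable_shiftSeq (x : lp (fun _ : ℕ => ℝ) 2) :
    Summable fun n => ‖shiftSeq x n‖ ^ (2 : ENNReal).toReal :=
  (summable_nat_add_iff 1).mp ((lp.memℓp x).summable (by norm_num))

theorem tsum_shiftSeq (x : lp (fun _ : ℕ => ℝ) 2) :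
    ∑' n, ‖shiftSeq x n‖ ^ (2 : ENNReal).toReal = ∑' n, ‖x n‖ ^ (2 : ENNReal).toReal := by
  rw [(summable_shiftSeq x).tsum_eq_zero_add]
  simp [shiftSeq]

/-- The right shift as a linear isometry of `ℓ²(ℕ, ℝ)`. -/
noncomputable def rightShift :
    lp (fun _ : ℕ => ℝ) 2 →ₗᵢ[ℝ] lp (fun _ : ℕ => ℝ) 2 where
  toFun x := ⟨shiftSeq x, memℓp_gen (summable_shiftSeq x)⟩
  map_add' x y := by
    ext n
    cases n with
    | zero => exact (add_zero (0 : ℝ)).symm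
    | succ k => rfl
  map_smul' c x := by
    ext n
    cases n with
    | zero => exact (mul_zero c).symm
    | succ k => rfl
  norm_map' x := by
    have h2 : 0 < (2 : ENNReal).toReal := by norm_num
    rw [lp.norm_eq_tsum_rpow h2, lp.norm_eq_tsum_rpow h2, ← tsum_shiftSeq x]
    rfl

theorem rightShift_zero (x : lp (fun _ : ℕ => ℝ) 2) : rightShift x 0 = 0 := rfl

theorem rightShift_succ (x : lp (fun _ : ℕ => ℝ) 2) (n : ℕ) : rightShift x (n + 1) = x n := rfl

/-- `S` has no eigenvectors, in the form needed for the segment from `x` to `S x`. -/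
theorem segment_rightShift_ne_zero (t : ℝ) {x : lp (fun _ : ℕ => ℝ) 2} (hx : x ≠ 0) :
    (1 - t) • x + t • rightShift x ≠ 0 := by
  intro h
  have hc : ∀ n, (1 - t) * x n + t * rightShift x n = 0 := fun n =>
    congrArg (fun y : lp (fun _ : ℕ => ℝ) 2 => y n) h
  apply hx
  ext n
  rw [lp.coeFn_zero, Pi.zero_apply]
  rcases eq_or_ne t 1 with rfl | ht
  · simpa [rightShift_succ] using hc (n + 1)
  · have ht' : 1 - t ≠ 0 := sub_ne_zero.mpr ht.symm
    induction n with
    | zero => simpa [rightShift_zero, ht'] using hc 0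
    | succ k ih => simpa [rightShift_succ, ih, ht'] using hc (k + 1)

theorem segment_rightShift_single_ne_zero (t : ℝ) {x : lp (fun _ : ℕ => ℝ) 2} (hx : x ≠ 0) :
    (1 - t) • rightShift x + t • lp.single (E := fun _ : ℕ => ℝ) 2 0 1 ≠ 0 := by
  intro h
  -- The zeroth coordinate of the sum is `t`.
  have ht : t = 0 := by
    have h0 : (1 - t) * rightShift x 0 + t * lp.single (E := fun _ : ℕ => ℝ) 2 0 1 0 = 0 :=
      congrArg (fun y : lp (fun _ : ℕ => ℝ) 2 => y 0) h
    simpa [rightShift_zero] using h0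
  subst ht
  apply hx
  have hS : rightShift x = 0 := by simpa using h
  exact rightShift.injective (hS.trans (map_zero rightShift).symm)

/-- The unit sphere of the real Hilbert space `ℓ²(ℕ, ℝ)` is contractible. -/
theorem unitSphere_l2_contractible :
    ContractibleSpace (Metric.sphere (0 : lp (fun _ : ℕ => ℝ) 2) 1) := by
  rw [contractible_iff_id_nullhomotopic]
  let S : C(Metric.sphere (0 : lp (fun _ : ℕ => ℝ) 2) 1,
      Metric.sphere (0 : lp (fun _ : ℕ => ℝ) 2) 1) :=
    ⟨fun x => ⟨rightShift x, by simp⟩,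
      Continuous.subtype_mk (rightShift.continuous.comp continuous_subtype_val) fun x => by simp⟩
  have he : lp.single (E := fun _ : ℕ => ℝ) 2 0 1 ∈
      Metric.sphere (0 : lp (fun _ : ℕ => ℝ) 2) 1 := by
    rw [mem_sphere_zero_iff_norm, lp.norm_single (by norm_num), norm_one]
  refine ⟨⟨_, he⟩, ContinuousMap.Homotopic.trans (g := S) ?_ ?_⟩
  · exact homotopic_of_segment_ne_zero _ _ fun t x =>
      segment_rightShift_ne_zero t (ne_zero_of_mem_unit_sphere x)
  · exact homotopic_of_segment_ne_zero _ _ fun t x =>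
      segment_rightShift_single_ne_zero t (ne_zero_of_mem_unit_sphere x)
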